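/- The language L = { 0^j 1^m 0^r 1^i 0^l 1^i 0^r 1^m 0^j : j, m, i, l, r ≥ 1 and r is prime } over the alphabet {0, 1} is not context-free. -/

import Mathlib

/-!
The proof combines a pumping lemma for context-free languages (without the usual bound on the
length of the pumped window) with the word `0 1 0ʳ 1 0 1 0ʳ 1 0`, `r` a large prime.

*Pumping.* `ThinYield g X s w` says that the sentential form `s` yields the terminal word `w` by a
parse forest in which every nonterminal lies in `X` and no nonterminal repeats along a path. Such
words have bounded length (`ThinYield.length_le`). Every derivation either can be made thin or
contains a pumpable loop `B ⇒* v B y` with `v y` nonempty (`thinYield_or_pumpable`): when a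
production `A → α` is put on top of thin trees, either `A` does not occur below, or it does, and
the part between the two occurrences is a loop, which can be cut out if it produces nothing.

*Counting.* Write the pumped words as `u vⁿ x yⁿ z`. Every word of the language has at least four
`1`s, so pumping down shows that `v` and `y` consist of `0`s. Hence the length of the `k`-th block
of `0`s of the `n`-th pumped word is `C k + n * D k`. The blocks `0`, `2`, `4` have length one for
`n = 1` and remain nonempty for `n = 0`, so `D 0 = D 2 = D 4 = 0`; the blocks `1` and `3` always
agree, so `D 1 = D 3 = d > 0`. For `n = r + 1` the block `1` has length `r * (1 + d)`,
which is not prime.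
-/

/-- The `i`-fold repetition `v^i` of a word `v`. -/
def wordPow {T : Type} (v : List T) : ℕ → List T
  | 0 => []
  | n + 1 => v ++ wordPow v n

/-- A production of a linear grammar: either `A → u` (with `u` a terminal word)
or `A → u B w` (with `u, w` terminal words and `B` a nonterminal). -/
structure LinearRule (T N : Type) where
  input : N
  output : List T ⊕ (List T × N × List T)

/-- `LinDerives rs A p` : from nonterminal `A`, the linear productions in `rs`
derive the terminal word `p`. -/
inductive LinDerives {T N : Type} (rs : List (LinearRule T N)) : N → List T → Prop
  | terminal {A : N} {u : List T} (hr : (⟨A, Sum.inl u⟩ : LinearRule T N) ∈ rs) :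
      LinDerives rs A u
  | step {A B : N} {u w p : List T}
      (hr : (⟨A, Sum.inr (u, B, w)⟩ : LinearRule T N) ∈ rs)
      (hp : LinDerives rs B p) :
      LinDerives rs A (u ++ p ++ w)

/-- A linear grammar: a type of nonterminals, a start symbol, and a
finite list of linear productions. -/
structure LinearGrammar (T : Type) where
  NT : Type
  start : NT
  rules : List (LinearRule T NT)

/-- The language generated by a linear grammar. -/
def LinearGrammar.language {T : Type} (G : LinearGrammar T) : Set (List T) :=
  {p | LinDerives G.rules G.start p}

/-- A linear grammar is `(g/h)`-rated linear (`k = g/h`) if every production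
`A → u B w` satisfies `h * |w| = g * |u|`. -/
def LinearGrammar.IsRated {T : Type} (g h : ℕ) (G : LinearGrammar T) : Prop :=
  ∀ r ∈ G.rules, ∀ u w, ∀ B : G.NT, r.output = Sum.inr (u, B, w) →
    h * w.length = g * u.length

/-- A grammar generates exactly the language `L`, up to the empty word. -/
def LinearGrammar.GeneratesModEmpty {T : Type} (G : LinearGrammar T) (L : Set (List T)) :
    Prop :=
  ∀ p : List T, p ≠ [] → (p ∈ L ↔ p ∈ G.language)

/-- A language is linear if some linear grammar generates it, up to the empty word. -/
def IsLinearLang {T : Type} (L : Set (List T)) : Prop :=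
  ∃ G : LinearGrammar T, G.GeneratesModEmpty L

/-- A language is `(g/h)`-rated linear if some `(g/h)`-rated linear grammar
generates it, up to the empty word. -/
def IsRatedLinearLang {T : Type} (g h : ℕ) (L : Set (List T)) : Prop :=
  ∃ G : LinearGrammar T, G.IsRated g h ∧ G.GeneratesModEmpty L

/-- A `k`-linear grammar: a linear grammar together with the extra production
`S → S₁S₂⋯S_k` from a start symbol `S`, where none of the `Sᵢ` (the `heads`)
occurs on the right-hand side of any other production and `S` occurs in no other
production at all (the latter is automatic here, since the start symbol is kept
as a fresh symbol outside the type `NT` of the remaining nonterminals). -/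
structure KLinearGrammar (T : Type) (k : ℕ) where
  NT : Type
  heads : Fin k → NT
  rules : List (LinearRule T NT)
  heads_not_on_rhs : ∀ r ∈ rules, ∀ u w, ∀ B : NT, r.output = Sum.inr (u, B, w) →
    ∀ i : Fin k, B ≠ heads i

/-- The language generated by a `k`-linear grammar: as the start symbol occurs
only in the production `S → S₁S₂⋯S_k`, it consists of the concatenations
`p₁p₂⋯p_k` where each `pᵢ` is derived from `Sᵢ` by the linear productions. -/
def KLinearGrammar.language {T : Type} {k : ℕ} (G : KLinearGrammar T k) : Set (List T) :=
  {p | ∃ ps : Fin k → List T, p = (List.ofFn ps).flatten ∧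
    ∀ i : Fin k, LinDerives G.rules (G.heads i) (ps i)}

/-- A language is `k`-linear if some `k`-linear grammar generates it, up to the
empty word. -/
def IsKLinearLang {T : Type} (k : ℕ) (L : Set (List T)) : Prop :=
  ∃ G : KLinearGrammar T k, ∀ p : List T, p ≠ [] → (p ∈ L ↔ p ∈ G.language)

/-- A language is metalinear if it is `k`-linear for some positive integer `k`. -/
def IsMetalinearLang {T : Type} (L : Set (List T)) : Prop :=
  ∃ k : ℕ, 0 < k ∧ IsKLinearLang k L

/-- The language `{0ʲ 1ᵐ 0ʳ 1ⁱ 0ˡ 1ⁱ 0ʳ 1ᵐ 0ʲ : j, m, i, l, r ≥ 1, r prime}`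
(Example 11), over the alphabet `Fin 2`. -/
def primeLang : Language (Fin 2) :=
  {p | ∃ j m i l r : ℕ, 1 ≤ j ∧ 1 ≤ m ∧ 1 ≤ i ∧ 1 ≤ l ∧ 1 ≤ r ∧ Nat.Prime r ∧
    p = List.replicate j 0 ++ List.replicate m 1 ++ List.replicate r 0 ++
        List.replicate i 1 ++ List.replicate l 0 ++ List.replicate i 1 ++
        List.replicate r 0 ++ List.replicate m 1 ++ List.replicate j 0}

/-! ### The pumping lemma -/

/-- `ThinYield g X s w`: the sentential form `s` yields the terminal word `w` by a parse forest
whose nonterminals all belong to `X` and in which no path from a root to a leaf meets the same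
nonterminal twice. -/
inductive ThinYield {T : Type} (g : ContextFreeGrammar T) :
    Set g.NT → List (Symbol T g.NT) → List T → Prop
  | nil (X : Set g.NT) : ThinYield g X [] []
  | term {X : Set g.NT} {s : List (Symbol T g.NT)} {w : List T} (a : T)
      (h : ThinYield g X s w) : ThinYield g X (Symbol.terminal a :: s) (a :: w)
  | nonterm {X : Set g.NT} {s : List (Symbol T g.NT)} {w₁ w₂ : List T}
      (r : ContextFreeRule T g.NT) (hr : r ∈ g.rules) (hX : r.input ∈ X)
      (h₁ : ThinYield g (X \ {r.input}) r.output w₁) (h₂ : ThinYield g X s w₂) :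
      ThinYield g X (Symbol.nonterminal r.input :: s) (w₁ ++ w₂)

section Pumping

variable {T : Type} {g : ContextFreeGrammar T}

lemma derives_append {s s' t t' : List (Symbol T g.NT)} (h : g.Derives s s')
    (h' : g.Derives t t') : g.Derives (s ++ t) (s' ++ t') :=
  (h.append_right t).trans (h'.append_left s')

lemma derives_rule {r : ContextFreeRule T g.NT} (hr : r ∈ g.rules) :
    g.Derives [Symbol.nonterminal r.input] r.output :=
  ContextFreeGrammar.Produces.single ⟨r, hr, ContextFreeRule.Rewrites.input_output⟩

lemma ThinYield.derives {X : Set g.NT} {s : List (Symbol T g.NT)} {w : List T}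
    (h : ThinYield g X s w) : g.Derives s (w.map Symbol.terminal) := by
  induction h with
  | nil X => exact ContextFreeGrammar.Derives.refl _
  | term a h ih => simpa using ih.append_left [Symbol.terminal a]
  | nonterm r hr hX h₁ h₂ ih₁ ih₂ =>
    simpa using derives_append ((derives_rule hr).trans ih₁) ih₂

lemma ThinYield.mono {X : Set g.NT} {s : List (Symbol T g.NT)} {w : List T}
    (h : ThinYield g X s w) : ∀ {Y : Set g.NT}, X ⊆ Y → ThinYield g Y s w := by
  induction h with
  | nil X => exact fun _ => .nil _
  | term a h ih => exact fun hY => .term a (ih hY)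
  | nonterm r hr hX h₁ h₂ ih₁ ih₂ =>
    exact fun hY => .nonterm r hr (hY hX) (ih₁ (Set.sdiff_subset_sdiff_left hY)) (ih₂ hY)

lemma ThinYield.append {X : Set g.NT} {s t : List (Symbol T g.NT)} {w w' : List T}
    (h : ThinYield g X s w) (h' : ThinYield g X t w') : ThinYield g X (s ++ t) (w ++ w') := by
  induction h with
  | nil X => exact h'
  | term a h ih => exact .term a (ih h')
  | nonterm r hr hX h₁ h₂ ih₁ ih₂ =>
    rw [List.append_assoc]
    exact .nonterm r hr hX h₁ (ih₂ h')

lemma ThinYield.split {X : Set g.NT} (s : List (Symbol T g.NT)) :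
    ∀ {t : List (Symbol T g.NT)} {w : List T}, ThinYield g X (s ++ t) w →
      ∃ w₁ w₂, w = w₁ ++ w₂ ∧ ThinYield g X s w₁ ∧ ThinYield g X t w₂ := by
  induction s with
  | nil => exact fun h => ⟨[], _, rfl, .nil _, h⟩
  | cons c s ih =>
    intro t w h
    rw [List.cons_append] at h
    cases h with
    | term a h =>
      obtain ⟨w₁, w₂, rfl, h₁, h₂⟩ := ih h
      exact ⟨a :: w₁, w₂, rfl, .term a h₁, h₂⟩
    | nonterm r hr hX h₀ h =>
      obtain ⟨w₁, w₂, rfl, h₁, h₂⟩ := ih h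
      exact ⟨_ ++ w₁, w₂, (List.append_assoc _ _ _).symm, .nonterm r hr hX h₀ h₁, h₂⟩

lemma thinYield_terminals (X : Set g.NT) (w : List T) :
    ThinYield g X (w.map Symbol.terminal) w := by
  induction w with
  | nil => exact .nil _
  | cons a w ih => exact .term a ih

/-- A thin parse forest either avoids the nonterminal `A`, or splits at an occurrence of `A`. -/
lemma ThinYield.avoid_or_split {X : Set g.NT} {s : List (Symbol T g.NT)} {w : List T}
    (h : ThinYield g X s w) (A : g.NT) :
    ThinYield g (X \ {A}) s w ∨ ∃ u x z, w = u ++ x ++ z ∧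
      g.Derives s (u.map Symbol.terminal ++ [Symbol.nonterminal A] ++ z.map Symbol.terminal) ∧
      ThinYield g X [Symbol.nonterminal A] x := by
  induction h with
  | nil X => exact .inl (.nil _)
  | term a h ih =>
    rcases ih with ih | ⟨u, x, z, rfl, hd, hx⟩
    · exact .inl (.term a ih)
    · refine .inr ⟨a :: u, x, z, by simp, ?_, hx⟩
      simpa using hd.append_left [Symbol.terminal a]
  | @nonterm X s w₁ w₂ r hr hX h₁ h₂ ih₁ ih₂ =>
    by_cases hA : r.input = A
    · subst hA
      refine .inr ⟨[], w₁, w₂, by simp, ?_, ?_⟩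
      · simpa using h₂.derives.append_left [Symbol.nonterminal r.input]
      · simpa using ThinYield.nonterm r hr hX h₁ (.nil X)
    rcases ih₁ with ih₁ | ⟨u, x, z, rfl, hd, hx⟩
    · rcases ih₂ with ih₂ | ⟨u, x, z, rfl, hd, hx⟩
      · refine .inl (.nonterm r hr ⟨hX, hA⟩ ?_ ih₂)
        rwa [Set.sdiff_sdiff_comm]
      · refine .inr ⟨w₁ ++ u, x, z, by simp, ?_, hx⟩
        simpa using derives_append ((derives_rule hr).trans h₁.derives) hd
    · refine .inr ⟨u, x, z ++ w₂, by simp, ?_, hx.mono Set.sdiff_subset⟩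
      simpa using derives_append ((derives_rule hr).trans hd) h₂.derives

/-- The sentential form `s` derives `w` through a loop `B ⇒* v B y` with `v y` nonempty. -/
def Pumpable (g : ContextFreeGrammar T) (s : List (Symbol T g.NT)) (w : List T) : Prop :=
  ∃ (B : g.NT) (u v x y z : List T), w = u ++ v ++ x ++ y ++ z ∧ v ++ y ≠ [] ∧
    g.Derives s (u.map Symbol.terminal ++ [Symbol.nonterminal B] ++ z.map Symbol.terminal) ∧
    g.Derives [Symbol.nonterminal B]
      (v.map Symbol.terminal ++ [Symbol.nonterminal B] ++ y.map Symbol.terminal) ∧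
    g.Derives [Symbol.nonterminal B] (x.map Symbol.terminal)

lemma thinYield_or_pumpable {X : Set g.NT} (hX : ∀ r ∈ g.rules, r.input ∈ X)
    {s : List (Symbol T g.NT)} {w : List T} (h : g.Derives s (w.map Symbol.terminal)) :
    ThinYield g X s w ∨ Pumpable g s w := by
  unfold ContextFreeGrammar.Derives at h
  induction h using Relation.ReflTransGen.head_induction_on with
  | refl => exact .inl (thinYield_terminals X w)
  | @head s s' hp _ ih =>
    rcases ih with ih | ⟨B, u, v, x, y, z, hw, hne, hd, h⟩
    · obtain ⟨r, hr, hrw⟩ := hp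
      obtain ⟨p, q, rfl, rfl⟩ := hrw.exists_parts
      obtain ⟨w₀, w₃, rfl, h₀, h₃⟩ := ThinYield.split _ ih
      obtain ⟨w₁, w₂, rfl, h₁, h₂⟩ := ThinYield.split _ h₀
      -- A thin tree below `r.input` replaces the production on top of the forest.
      have key : ThinYield g X [Symbol.nonterminal r.input] w₂ →
          ThinYield g X (p ++ [Symbol.nonterminal r.input] ++ q) (w₁ ++ w₂ ++ w₃) :=
        fun h => (h₁.append h).append h₃
      rcases h₂.avoid_or_split r.input with h₂ | ⟨u, x, z, rfl, hd, hx⟩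
      · left
        apply key
        simpa using ThinYield.nonterm r hr (hX r hr) h₂ (.nil X)
      · by_cases hne : u ++ z = []
        · obtain ⟨rfl, rfl⟩ := List.append_eq_nil_iff.1 hne
          left
          apply key
          simpa using hx
        · right
          refine ⟨r.input, w₁, u, x, z, w₃, by simp, hne, ?_, (derives_rule hr).trans hd,
            hx.derives⟩
          exact derives_append (h₁.derives.append_right _) h₃.derives
    · exact .inr ⟨B, u, v, x, y, z, hw, hne, hp.trans_derives hd, h⟩

lemma ThinYield.length_le {M : ℕ} (hM : ∀ r ∈ g.rules, r.output.length ≤ M)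
    {X : Set g.NT} {s : List (Symbol T g.NT)} {w : List T} (h : ThinYield g X s w) :
    X.Finite → w.length ≤ s.length * (M + 1) ^ X.ncard := by
  induction h with
  | nil X => simp
  | @term X s w a h ih =>
    intro hf
    have := ih hf
    have h1 : 1 ≤ (M + 1) ^ X.ncard := Nat.one_le_pow _ _ (Nat.succ_pos _)
    simp only [List.length_cons]
    linarith
  | @nonterm X s w₁ w₂ r hr hX h₁ h₂ ih₁ ih₂ =>
    intro hf
    have e₂ := ih₂ hf
    have e₁ := ih₁ hf.sdiff
    have hc : (X \ {r.input}).ncard + 1 = X.ncard := Set.ncard_sdiff_singleton_add_one hX hf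
    have e : w₁.length ≤ (M + 1) ^ X.ncard := by
      rw [← hc, pow_succ, mul_comm]
      exact e₁.trans (Nat.mul_le_mul_right _ ((hM r hr).trans (Nat.le_succ M)))
    simp only [List.length_cons, List.length_append]
    linarith

lemma wordPow_comm (v : List T) (n : ℕ) : v ++ wordPow v n = wordPow v n ++ v := by
  induction n with
  | zero => simp [wordPow]
  | succ n ih => simp only [wordPow, List.append_assoc, ← ih]

lemma derives_loop_pow {B : g.NT} {v y : List T}
    (h : g.Derives [Symbol.nonterminal B]
      (v.map Symbol.terminal ++ [Symbol.nonterminal B] ++ y.map Symbol.terminal)) (n : ℕ) :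
    g.Derives [Symbol.nonterminal B] ((wordPow v n).map Symbol.terminal ++
      [Symbol.nonterminal B] ++ (wordPow y n).map Symbol.terminal) := by
  induction n with
  | zero => exact ContextFreeGrammar.Derives.refl _
  | succ n ih =>
    have := h.trans ((ih.append_left (v.map Symbol.terminal)).append_right (y.map Symbol.terminal))
    have e : wordPow y (n + 1) = wordPow y n ++ y := wordPow_comm y n
    rw [e]
    simpa [wordPow] using this

/-- The pumping lemma for context-free languages, without a bound on the length of `v x y`. -/
theorem exists_pumping {L : Language T} (hL : L.IsContextFree) :
    ∃ p : ℕ, ∀ w ∈ L, p < w.length → ∃ u v x y z : List T,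
      w = u ++ v ++ x ++ y ++ z ∧ v ++ y ≠ [] ∧
      ∀ n, u ++ wordPow v n ++ x ++ wordPow y n ++ z ∈ L := by
  obtain ⟨g, rfl⟩ := hL
  set X : Set g.NT := Set.image ContextFreeRule.input (g.rules : Set (ContextFreeRule T g.NT))
  have hf : X.Finite := g.rules.finite_toSet.image _
  set M : ℕ := g.rules.sup fun r => r.output.length
  have hM : ∀ r ∈ g.rules, r.output.length ≤ M := fun r hr =>
    Finset.le_sup (f := fun r : ContextFreeRule T g.NT => r.output.length) hr
  refine ⟨(M + 1) ^ X.ncard, fun w hw hlen => ?_⟩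
  rw [ContextFreeGrammar.mem_language_iff] at hw
  rcases thinYield_or_pumpable (X := X) (fun r hr => ⟨r, hr, rfl⟩) hw with h |
    ⟨B, u, v, x, y, z, hw, hne, h₁, h₂, h₃⟩
  · have := h.length_le hM hf
    simp only [List.length_singleton, one_mul] at this
    omega
  · refine ⟨u, v, x, y, z, hw, hne, fun n => ?_⟩
    rw [ContextFreeGrammar.mem_language_iff]
    have h := (derives_loop_pow h₂ n).trans
      ((h₃.append_left ((wordPow v n).map Symbol.terminal)).append_right
        ((wordPow y n).map Symbol.terminal))
    have := h₁.trans ((h.append_left (u.map Symbol.terminal)).append_right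
        (z.map Symbol.terminal))
    simpa using this

end Pumping

/-! ### Blocks of zeros -/

/-- The length of the `k`-th block of zeros of `w`, i.e. the number of `0`s of `w` that are
preceded by exactly `k` letters `1`. -/
def zeroBlock : ℕ → List (Fin 2) → ℕ
  | _, [] => 0
  | 0, a :: w => if a = 0 then zeroBlock 0 w + 1 else 0
  | k + 1, a :: w => if a = 0 then zeroBlock (k + 1) w else zeroBlock k w

lemma zeroBlock_replicate_append (n k : ℕ) (w : List (Fin 2)) :
    zeroBlock k (List.replicate n 0 ++ w) = zeroBlock k w + if k = 0 then n else 0 := by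
  induction n with
  | zero => simp
  | succ n ih =>
    cases k with
    | zero => simp_all [List.replicate_succ, zeroBlock]; omega
    | succ k => simp_all [List.replicate_succ, zeroBlock]

lemma zeroBlock_insert (n : ℕ) (t u : List (Fin 2)) : ∀ k : ℕ,
    zeroBlock k (u ++ (List.replicate n 0 ++ t)) =
      zeroBlock k (u ++ t) + if k = u.count 1 then n else 0 := by
  induction u with
  | nil => intro k; exact zeroBlock_replicate_append n k t
  | cons a u ih =>
    intro k
    fin_cases a <;> cases k <;> (simp [zeroBlock, ih]; try omega)

lemma count_wordPow (v : List (Fin 2)) (n : ℕ) :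
    (wordPow v n).count 1 = n * v.count 1 := by
  induction n with
  | zero => simp [wordPow]
  | succ n ih => simp [wordPow, ih]; ring

lemma wordPow_replicate (a n : ℕ) :
    wordPow (List.replicate a (0 : Fin 2)) n = List.replicate (n * a) 0 := by
  induction n with
  | zero => simp [wordPow]
  | succ n ih => rw [wordPow, ih, ← List.replicate_add]; congr 1; ring

lemma eq_replicate_of_count {v : List (Fin 2)} (h : v.count 1 = 0) :
    v = List.replicate v.length 0 := by
  rw [List.eq_replicate_iff]
  refine ⟨rfl, fun b hb => ?_⟩
  have := List.count_eq_zero.1 h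
  by_contra hb0
  have : b = 1 := by omega
  subst this
  contradiction

lemma four_le_count {p : List (Fin 2)} (hp : p ∈ primeLang) : 4 ≤ p.count 1 := by
  obtain ⟨j, m, i, l, r, hj, hm, hi, hl, hr, hpr, rfl⟩ := hp
  simp [List.count_replicate]
  omega

lemma zeroBlock_of_mem {p : List (Fin 2)} (hp : p ∈ primeLang) (h4 : p.count 1 = 4) :
    1 ≤ zeroBlock 0 p ∧ 1 ≤ zeroBlock 2 p ∧ 1 ≤ zeroBlock 4 p ∧
      zeroBlock 1 p = zeroBlock 3 p ∧ (zeroBlock 1 p).Prime := by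
  obtain ⟨j, m, i, l, r, hj, hm, hi, hl, hr, hpr, rfl⟩ := hp
  simp [List.count_replicate] at h4
  obtain rfl : m = 1 := by omega
  obtain rfl : i = 1 := by omega
  have e := zeroBlock_replicate_append j
  have e' : ∀ k, zeroBlock k (List.replicate j 0) = if k = 0 then j else 0 := by
    intro k
    have := e k []
    cases k <;> simpa [zeroBlock] using this
  simp only [List.append_assoc, zeroBlock_replicate_append]
  simp [zeroBlock, zeroBlock_replicate_append, e', hj, hl, hpr]

/-- The language `{0ʲ 1ᵐ 0ʳ 1ⁱ 0ˡ 1ⁱ 0ʳ 1ᵐ 0ʲ : j, m, i, l, r ≥ 1, r prime}` is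
not context-free (Example 11). -/
theorem primeLang_not_contextFree : ¬ primeLang.IsContextFree := by
  intro hL
  obtain ⟨p, hp⟩ := exists_pumping hL
  obtain ⟨r, hpr, hr⟩ := Nat.exists_infinite_primes (p + 1)
  set w : List (Fin 2) := List.replicate 1 0 ++ List.replicate 1 1 ++ List.replicate r 0 ++
        List.replicate 1 1 ++ List.replicate 1 0 ++ List.replicate 1 1 ++
        List.replicate r 0 ++ List.replicate 1 1 ++ List.replicate 1 0 with hw
  have hwL : w ∈ primeLang :=
    ⟨1, 1, 1, 1, r, le_rfl, le_rfl, le_rfl, le_rfl, hr.one_lt.le, hr, rfl⟩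
  have hw4 : w.count 1 = 4 := by simp [hw, List.count_replicate]
  have hb : zeroBlock 0 w = 1 ∧ zeroBlock 1 w = r ∧ zeroBlock 2 w = 1 ∧ zeroBlock 4 w = 1 := by
    simp [hw, zeroBlock, zeroBlock_replicate_append]
  obtain ⟨u, v, x, y, z, hd, hne, hn⟩ := hp w hwL (by simp [hw]; omega)
  have hcount : u.count 1 + v.count 1 + x.count 1 + y.count 1 + z.count 1 = 4 := by
    rw [← hw4, hd]; simp [add_assoc]
  have h0 : 4 ≤ u.count 1 + x.count 1 + z.count 1 := by
    have := four_le_count (hn 0)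
    simpa [wordPow, add_assoc] using this
  have hv : v = List.replicate v.length 0 := eq_replicate_of_count (by omega)
  have hy : y = List.replicate y.length 0 := eq_replicate_of_count (by omega)
  have hlen : 1 ≤ v.length + y.length := by
    by_contra hcon
    apply hne
    rw [← List.length_eq_zero_iff, List.length_append]
    omega
  have hc4 : ∀ n, (u ++ wordPow v n ++ x ++ wordPow y n ++ z).count 1 = 4 := by
    intro n
    have e1 : v.count 1 = 0 := by omega
    have e2 : y.count 1 = 0 := by omega
    simp only [List.count_append, count_wordPow, e1, e2]
    omega
  have hmem := fun n => zeroBlock_of_mem (hn n) (hc4 n)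
  -- The block lengths are affine functions of the number `n` of repetitions.
  have haff : ∀ n k, zeroBlock k (u ++ wordPow v n ++ x ++ wordPow y n ++ z) =
      zeroBlock k (u ++ x ++ z) + n * ((if k = u.count 1 then v.length else 0) +
        (if k = u.count 1 + x.count 1 then y.length else 0)) := by
    intro n k
    have e := zeroBlock_insert (n * v.length) (x ++ (List.replicate (n * y.length) 0 ++ z)) u k
    have e' := zeroBlock_insert (n * y.length) z (u ++ x) k
    rw [hv, hy, wordPow_replicate, wordPow_replicate]
    simp only [List.append_assoc, List.count_append, List.length_replicate] at e e' ⊢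
    rw [e, e']
    split_ifs <;> ring
  have hw1 : w = u ++ wordPow v 1 ++ x ++ wordPow y 1 ++ z := by simp [hd, wordPow]
  simp only [haff] at hmem
  rw [hw1] at hb
  simp only [haff] at hb
  generalize hC : (fun k => zeroBlock k (u ++ x ++ z)) = C at *
  generalize hD : (fun k => (if k = u.count 1 then v.length else 0) +
        (if k = u.count 1 + x.count 1 then y.length else 0)) = D at *
  have hC' : ∀ k, zeroBlock k (u ++ x ++ z) = C k := fun k => congrFun hC k
  have hD' : ∀ k, (if k = u.count 1 then v.length else 0) +
        (if k = u.count 1 + x.count 1 then y.length else 0) = D k := fun k => congrFun hD k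
  have hsum : D 0 + D 1 + D 2 + D 3 + D 4 = v.length + y.length := by
    simp only [← hD']
    have hu : u.count 1 ≤ 4 := by omega
    have hx : u.count 1 + x.count 1 ≤ 4 := by omega
    generalize u.count 1 + x.count 1 = c at hx ⊢
    generalize u.count 1 = b at hu ⊢
    interval_cases b <;> interval_cases c <;> simp <;> omega
  simp only [hC', hD'] at hmem hb
  obtain ⟨a0, a2, a4, a13, -⟩ := hmem 0
  obtain ⟨-, -, -, b13, -⟩ := hmem 1
  have hD1 : 1 ≤ D 1 := by omega
  -- After `r + 1` repetitions the block has length `C 1 + (r + 1) * D 1 = r * (1 + D 1)`.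
  obtain ⟨-, -, -, -, hprime⟩ := hmem (r + 1)
  have e : C 1 + (r + 1) * D 1 = r * (1 + D 1) := by
    have := hb.2.1
    linear_combination this
  rw [e] at hprime
  exact Nat.not_prime_mul hr.ne_one (by omega) hprime
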